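/- arXiv:2105.05142 — 4 statements merged into one kernel-verified Lean document; each statement's English description precedes it below -/
import Mathlib

section
/- There exists a liquid democracy game with no pure-strategy Nash equilibrium. Concretely, in the 3-agent game with utility vectors u_1 = (1/2, 1, 0), u_2 = (0, 1/2, 1), u_3 = (1, 0, 1/2) (where u_i = (u_{i1}, u_{i2}, u_{i3})), no pure strategy profile is a Nash equilibrium, i.e., in every pure profile some agent can strictly increase her utility by unilaterally switching to another pure strategy. -/
/-!
In a pure equilibrium every agent can vote herself, and so, valuing herself positively, has a guru
she likes at least as much as herself; and no self-voter prefers another self-voter to herself.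
Hence, barring ties, the self-voters form a kernel of the digraph with an arc from `i` to `j`
whenever `i` prefers `j` to herself as guru. In the game at hand this digraph is a directed
3-cycle. Membership in a kernel would have to alternate along that cycle, which is impossible
because its length is odd.
-/

open Finset

/-- The guru of agent `i` under pure profile `s` (where `s i = some j` means `i`
delegates to `j`, with `s i = some i` meaning `i` votes herself, and `s i = none`
meaning `i` abstains): follow delegation arcs for `n` steps; the endpoint is the
guru provided it votes itself. -/
def guru {n : ℕ} (s : Fin n → Option (Fin n)) (i : Fin n) : Option (Fin n) :=
  ((fun o => Option.bind o s)^[n] (some i)).bind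
    (fun j => if s j = some j then some j else none)

/-- Utility of agent `i` in the pure profile `s`: `u i (g i)` if the guru exists, else `0`. -/
def pureUtil {n : ℕ} (u : Fin n → Fin n → ℝ) (s : Fin n → Option (Fin n)) (i : Fin n) : ℝ :=
  (guru s i).elim 0 (u i)

/-- A mixed strategy for a single agent: nonnegative, total probability at most one
(the residual probability is abstention). -/
def IsStrat {n : ℕ} (y : Fin n → ℝ) : Prop := (∀ j, 0 ≤ y j) ∧ (∑ j, y j) ≤ 1

/-- A mixed strategy profile. -/
def IsMixed {n : ℕ} (x : Fin n → Fin n → ℝ) : Prop := ∀ i, IsStrat (x i)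

/-- Probability that the independent randomization `x` produces the pure profile `s`. -/
def prob {n : ℕ} (x : Fin n → Fin n → ℝ) (s : Fin n → Option (Fin n)) : ℝ :=
  ∏ i, (s i).elim (1 - ∑ j, x i j) (x i)

/-- Expected utility of agent `i` under the mixed profile `x`. -/
def util {n : ℕ} (u x : Fin n → Fin n → ℝ) (i : Fin n) : ℝ :=
  ∑ s : Fin n → Option (Fin n), prob x s * pureUtil u s i

/-- Expected social welfare of the mixed profile `x`. -/
def SW {n : ℕ} (u x : Fin n → Fin n → ℝ) : ℝ := ∑ i, util u x i

/-- The set of social-welfare values achievable by mixed profiles; `OPT` is its greatest element. -/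
def SWvals {n : ℕ} (u : Fin n → Fin n → ℝ) : Set ℝ :=
  {w | ∃ x, IsMixed x ∧ w = SW u x}

/-- `x` is an `ε`-Nash equilibrium. -/
def EpsNash {n : ℕ} (u : Fin n → Fin n → ℝ) (ε : ℝ) (x : Fin n → Fin n → ℝ) : Prop :=
  ∀ i y, IsStrat y → util u x i ≥ (1 - ε) * util u (Function.update x i y) i

/-- `x` is an (exact, mixed) Nash equilibrium. -/
def NashEq {n : ℕ} (u x : Fin n → Fin n → ℝ) : Prop :=
  ∀ i y, IsStrat y → util u x i ≥ util u (Function.update x i y) i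

section Kernel

variable {V : Type*} {r : V → V → Prop} {f : V → V} {K : Set V} {v : V} {k : ℕ}

/-- `K` is a kernel of the digraph with arc relation `r`: no arc joins two vertices of `K`
(left to right), and every vertex outside `K` has an arc into `K` (right to left). -/
def IsKernel (r : V → V → Prop) (K : Set V) : Prop :=
  ∀ v, v ∈ K ↔ ∀ w ∈ K, ¬ r v w

lemma IsKernel.mem_iff_apply_notMem (hK : IsKernel (f · = ·) K) : v ∈ K ↔ f v ∉ K :=
  (hK v).trans ⟨fun h hv => h _ hv rfl, fun h _ hw hvw => h (hvw ▸ hw)⟩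

lemma IsKernel.iterate_mem_iff (hK : IsKernel (f · = ·) K) :
    f^[k] v ∈ K ↔ (v ∈ K ↔ Even k) := by
  induction k with
  | zero => simp
  | succ k ih =>
    have alternates : f^[k] v ∈ K ↔ f (f^[k] v) ∉ K := hK.mem_iff_apply_notMem
    rw [Function.iterate_succ_apply', Nat.even_add_one]
    tauto

theorem not_isKernel_of_odd_of_isPeriodicPt (hk : Odd k) (hv : Function.IsPeriodicPt f k v) :
    ¬ IsKernel (f · = ·) K := by
  intro hK
  have h : v ∈ K ↔ (v ∈ K ↔ Even k) := by
    simpa only [hv.eq] using hK.iterate_mem_iff (v := v) (k := k)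
  have : ¬ Even k := Nat.not_even_iff_odd.mpr hk
  tauto

end Kernel

section Guru

variable {n : ℕ} {s : Fin n → Option (Fin n)} {i j : Fin n}

/-- The agents who vote themselves under the pure profile `s`, i.e. the possible gurus. -/
def selfVoters (s : Fin n → Option (Fin n)) : Set (Fin n) :=
  {i | s i = some i}

lemma mem_selfVoters_of_guru_eq_some (h : guru s i = some j) : j ∈ selfVoters s := by
  obtain ⟨k, -, hk⟩ := Option.bind_eq_some_iff.mp h
  split_ifs at hk with hvote
  obtain rfl : k = j := Option.some.inj hk
  exact hvote

lemma guru_eq_some_of_mem_selfVoters (hij : s i = some j) (hj : j ∈ selfVoters s) :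
    guru s i = some j := by
  have hj : s j = some j := hj
  obtain ⟨m, rfl⟩ : ∃ m, n = m + 1 := Nat.exists_eq_add_one.mpr i.pos
  have endpoint : (fun o => Option.bind o s)^[m + 1] (some i) = some j := by
    rw [Function.iterate_succ_apply, Option.bind_some, hij]
    exact Function.iterate_fixed hj m
  rw [guru, endpoint, Option.bind_some, if_pos hj]

lemma guru_update_self : guru (Function.update s i (some i)) i = some i :=
  guru_eq_some_of_mem_selfVoters (Function.update_self ..) (Function.update_self ..)

lemma guru_update_of_mem_selfVoters (hj : j ∈ selfVoters s) :
    guru (Function.update s i (some j)) i = some j := by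
  obtain rfl | hji := eq_or_ne j i
  · exact guru_update_self
  · exact guru_eq_some_of_mem_selfVoters (Function.update_self ..)
      ((Function.update_of_ne hji ..).trans hj)

end Guru

section PureNash

variable {n : ℕ} {u : Fin n → Fin n → ℝ} {s : Fin n → Option (Fin n)} {i j : Fin n}

lemma pureUtil_of_guru_eq_some (h : guru s i = some j) : pureUtil u s i = u i j := by
  rw [pureUtil, h, Option.elim_some]

/-- The pure profile `s` is a Nash equilibrium among pure profiles: no agent gains by switching
to another pure strategy. (`NashEq` is the notion for mixed profiles.) -/
def IsPureNash (u : Fin n → Fin n → ℝ) (s : Fin n → Option (Fin n)) : Prop :=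
  ∀ i t, pureUtil u (Function.update s i t) i ≤ pureUtil u s i

lemma IsPureNash.self_le_pureUtil (hs : IsPureNash u s) : u i i ≤ pureUtil u s i :=
  (pureUtil_of_guru_eq_some guru_update_self).symm.trans_le (hs i (some i))

lemma IsPureNash.le_pureUtil_of_mem_selfVoters (hs : IsPureNash u s) (hj : j ∈ selfVoters s) :
    u i j ≤ pureUtil u s i :=
  (pureUtil_of_guru_eq_some (guru_update_of_mem_selfVoters hj)).symm.trans_le (hs i (some j))

lemma IsPureNash.exists_selfVoter_ge (hs : IsPureNash u s) (hpos : 0 < u i i) :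
    ∃ j ∈ selfVoters s, u i i ≤ u i j := by
  have hle : u i i ≤ pureUtil u s i := hs.self_le_pureUtil
  cases hg : guru s i with
  | none =>
    have hzero : pureUtil u s i = 0 := by rw [pureUtil, hg, Option.elim_none]
    linarith
  | some j =>
    exact ⟨j, mem_selfVoters_of_guru_eq_some hg, hle.trans_eq (pureUtil_of_guru_eq_some hg)⟩

theorem IsPureNash.isKernel_selfVoters (hs : IsPureNash u s) (hpos : ∀ i, 0 < u i i)
    (hties : ∀ i j, u i j = u i i → j = i) :
    IsKernel (fun i j => u i i < u i j) (selfVoters s) := by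
  refine fun i => ⟨fun hi j hj => ?_, fun hi => ?_⟩
  · have hself : pureUtil u s i = u i i :=
      pureUtil_of_guru_eq_some (guru_eq_some_of_mem_selfVoters hi hi)
    exact ((hs.le_pureUtil_of_mem_selfVoters hj).trans_eq hself).not_gt
  · obtain ⟨j, hj, hij⟩ := hs.exists_selfVoter_ge (hpos i)
    obtain rfl : j = i := hties i j (hij.antisymm' (not_lt.mp (hi j hj)))
    exact hj

end PureNash

theorem stmt0_general {n k : ℕ} {u : Fin n → Fin n → ℝ} {f : Fin n → Fin n} {v : Fin n}
    (hpos : ∀ i, 0 < u i i) (hgt : ∀ i, u i i < u i (f i))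
    (hlt : ∀ i j, j ≠ i → f i ≠ j → u i j < u i i)
    (hk : Odd k) (hv : Function.IsPeriodicPt f k v) (s : Fin n → Option (Fin n)) :
    ∃ (i : Fin n) (t : Option (Fin n)),
      pureUtil u (Function.update s i t) i > pureUtil u s i := by
  by_contra! hs
  have hpref : (fun i j => u i i < u i j) = (f · = ·) := by
    funext i j
    refine propext ⟨fun hij => ?_, fun hij => hij ▸ hgt i⟩
    by_contra hne
    exact (hlt i j (fun hji => hij.ne' (hji ▸ rfl)) hne).not_gt hij
  have hties (i j : Fin n) (hij : u i j = u i i) : j = i := by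
    by_contra hne
    exact (hlt i j hne fun hfi => (hgt i).ne' (hfi ▸ hij)).ne hij
  have hK : IsKernel (f · = ·) (selfVoters s) :=
    hpref ▸ IsPureNash.isKernel_selfVoters hs hpos hties
  exact not_isKernel_of_odd_of_isPeriodicPt hk hv hK

/-- There is a liquid democracy game (the concrete 3-agent game below) in which no
pure strategy profile is a Nash equilibrium: in every pure profile some agent can
strictly increase her utility by unilaterally switching her pure strategy. -/
theorem stmt0 :
    ∃ u : Fin 3 → Fin 3 → ℝ,
      (∀ i j, 0 ≤ u i j ∧ u i j ≤ 1) ∧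
      u = ![![1/2, 1, 0], ![0, 1/2, 1], ![1, 0, 1/2]] ∧
      ∀ s : Fin 3 → Option (Fin 3),
        ∃ (i : Fin 3) (t : Option (Fin 3)),
          pureUtil u (Function.update s i t) i > pureUtil u s i := by
  refine ⟨_, ?_, rfl,
    stmt0_general (f := ![1, 2, 0]) (k := 3) (v := 0) ?_ ?_ ?_ (by decide) rfl⟩ <;>
    simp [Fin.forall_fin_succ, inv_le_one₀, inv_lt_one₀]
end

section
/- In the 3-agent liquid democracy game with utility vectors u_1 = (δ, 1, 0), u_2 = (0, δ, 1), u_3 = (1, 0, δ) for δ ∈ (0,1), the mixed profile x with x_1 = (δ, 1−δ, 0), x_2 = (0, δ, 1−δ), x_3 = (1−δ, 0, δ) is a mixed-strategy Nash equilibrium in which every agent has expected utility exactly δ, so SW(x) = 3δ; moreover the optimal social welfare of this game is OPT = 1 + 2δ. -/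
/-!
Every agent `i` has a favourite `k ≠ i`, and her payoff is `δ` if she is her own guru, `1` if `k` is
her guru and `0` otherwise. She is her own guru exactly when she votes, and `k` can be her guru only
when she does not vote and `k` does; conversely `k` is her guru when she delegates directly to `k`
and `k` votes. In a mixed profile `x` this squeezes her expected utility:
`δ * x i i + x i k * x k k ≤ util u x i ≤ δ * x i i + (1 - x i i) * x k k`.

If everybody votes with probability `δ`, the upper bound is `δ` whatever `i` does, and the lower
bound is `δ` as well when she otherwise delegates to her favourite.

For three agents in a cycle who vote with probabilities `a`, `b`, `c`, the upper bounds sum to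
`1 + 2 * δ + (δ * (a + b + c - 2) - a * b * c) - (1 - a) * (1 - b) * (1 - c)`, which is at most
`1 + 2 * δ` because `a + b + c - 2 ≤ a * b * c`. This is attained when two agents vote and the third
delegates to her favourite.
-/

open Finset

section Strategies

variable {n : ℕ}

lemma IsStrat.apply_le_one {y : Fin n → ℝ} (hy : IsStrat y) (i : Fin n) : y i ≤ 1 :=
  (single_le_sum (fun j _ => hy.1 j) (mem_univ i)).trans hy.2

lemma isStrat_single (j : Fin n) : IsStrat (Pi.single j 1) := by
  have hnonneg : (0 : Fin n → ℝ) ≤ Pi.single j 1 := Pi.single_nonneg.2 zero_le_one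
  exact ⟨hnonneg, by simp⟩

lemma IsMixed.update {x : Fin n → Fin n → ℝ} (hx : IsMixed x) (i : Fin n) {y : Fin n → ℝ}
    (hy : IsStrat y) : IsMixed (Function.update x i y) :=
  (Function.forall_update_iff x fun _ => IsStrat).2 ⟨hy, fun j _ => hx j⟩

end Strategies

section Expectation

variable {n : ℕ}

/-- The probability with which the mixed strategy `y` makes the choice `o`, where `none` stands for
abstention. -/
def choiceProb (y : Fin n → ℝ) (o : Option (Fin n)) : ℝ := o.elim (1 - ∑ j, y j) y

lemma choiceProb_nonneg {y : Fin n → ℝ} (hy : IsStrat y) (o : Option (Fin n)) :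
    0 ≤ choiceProb y o := by
  cases o with
  | none => exact sub_nonneg.2 hy.2
  | some j => exact hy.1 j

lemma sum_choiceProb (y : Fin n → ℝ) : ∑ o, choiceProb y o = 1 := by
  simp [choiceProb, Fintype.sum_option]

lemma prob_nonneg {x : Fin n → Fin n → ℝ} (hx : IsMixed x) (s : Fin n → Option (Fin n)) :
    0 ≤ prob x s :=
  prod_nonneg fun i _ => choiceProb_nonneg (hx i) (s i)

/-- The expectation of a function of the pure profile under the mixed profile `x`, as a linear
functional. -/
def expectation (x : Fin n → Fin n → ℝ) : ((Fin n → Option (Fin n)) → ℝ) →ₗ[ℝ] ℝ :=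
  Fintype.linearCombination ℝ (prob x)

lemma expectation_apply (x : Fin n → Fin n → ℝ) (φ : (Fin n → Option (Fin n)) → ℝ) :
    expectation x φ = ∑ s, prob x s * φ s := by
  simp only [expectation, Fintype.linearCombination_apply, smul_eq_mul, mul_comm]

lemma util_eq_expectation (u x : Fin n → Fin n → ℝ) (i : Fin n) :
    util u x i = expectation x (fun s => pureUtil u s i) :=
  (expectation_apply x _).symm

lemma expectation_mono {x : Fin n → Fin n → ℝ} (hx : IsMixed x)
    {φ ψ : (Fin n → Option (Fin n)) → ℝ} (h : φ ≤ ψ) : expectation x φ ≤ expectation x ψ := by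
  simp only [expectation_apply]
  exact sum_le_sum fun s _ => mul_le_mul_of_nonneg_left (h s) (prob_nonneg hx s)

lemma expectation_prod (x : Fin n → Fin n → ℝ) (F : Fin n → Option (Fin n) → ℝ) :
    expectation x (fun s => ∏ i, F i (s i)) = ∏ i, ∑ o, choiceProb (x i) o * F i o := by
  rw [expectation_apply, Fintype.prod_sum]
  exact sum_congr rfl fun s _ => prod_mul_distrib.symm

/-- The indicator function of the event that agent `i` chooses `j`: that she delegates to `j`, or
that she votes if `j = i`. -/
def choiceInd (i j : Fin n) (s : Fin n → Option (Fin n)) : ℝ := if s i = some j then 1 else 0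

lemma expectation_prod_choiceInd (x : Fin n → Fin n → ℝ) (A : Finset (Fin n)) (c : Fin n → Fin n) :
    expectation x (∏ i ∈ A, choiceInd i (c i)) = ∏ i ∈ A, x i (c i) := by
  let F (i : Fin n) (o : Option (Fin n)) : ℝ :=
    if i ∈ A then (if o = some (c i) then 1 else 0) else 1
  have hF : ∏ i ∈ A, choiceInd i (c i) = fun s => ∏ i, F i (s i) := by
    ext s
    simp only [F, prod_apply, choiceInd, Fintype.prod_ite_mem]
  have hsum (i : Fin n) :
      ∑ o, choiceProb (x i) o * F i o = if i ∈ A then x i (c i) else 1 := by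
    by_cases hi : i ∈ A
    · simp [F, hi, choiceProb]
    · simp only [F, if_neg hi, mul_one, sum_choiceProb]
  rw [hF, expectation_prod]
  simp only [hsum, Fintype.prod_ite_mem]

lemma expectation_choiceInd (x : Fin n → Fin n → ℝ) (i j : Fin n) :
    expectation x (choiceInd i j) = x i j := by
  simpa only [prod_singleton] using expectation_prod_choiceInd x {i} fun _ => j

lemma expectation_choiceInd_mul (x : Fin n → Fin n → ℝ) {i k : Fin n} (hik : i ≠ k)
    (j l : Fin n) : expectation x (choiceInd i j * choiceInd k l) = x i j * x k l := by
  simpa only [prod_pair hik, if_true, if_neg hik.symm] using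
    expectation_prod_choiceInd x {i, k} fun m => if m = i then j else l

end Expectation

section Guru

variable {n : ℕ} {s : Fin n → Option (Fin n)} {i j : Fin n}

lemma votes_of_guru_eq_some (h : guru s i = some j) : s j = some j := by
  obtain ⟨k, -, hk⟩ := Option.bind_eq_some_iff.1 h
  split_ifs at hk with hvote
  exact Option.some.inj hk ▸ hvote

lemma guru_eq_some_of_votes (hi : s i = some j) (hj : s j = some j) : guru s i = some j := by
  obtain ⟨m, rfl⟩ := Nat.exists_eq_add_one.2 i.pos
  have hstep : (fun o => Option.bind o s)^[m + 1] (some i) = some j := by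
    rw [Function.iterate_succ_apply, Option.bind_some, hi]
    exact Function.iterate_fixed hj m
  simp [guru, hstep, hj]

end Guru

section Favourite

variable {n : ℕ} {f : Fin n → Fin n} {δ : ℝ}

/-- The utilities of the game in which agent `i` values herself as guru at `δ`, her favourite `f i`
at `1` and everybody else at `0`; meant for `f` without fixed points. -/
def favouriteUtil (f : Fin n → Fin n) (δ : ℝ) (i : Fin n) : Fin n → ℝ :=
  Pi.single i δ + Pi.single (f i) 1

/-- The mixed profile in which agent `i` votes with probability `p` and otherwise delegates to her
favourite `f i`. -/
def voteOrFavourite (f : Fin n → Fin n) (p : ℝ) (i : Fin n) : Fin n → ℝ :=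
  Pi.single i p + Pi.single (f i) (1 - p)

lemma favouriteUtil_self {i : Fin n} (hi : f i ≠ i) : favouriteUtil f δ i i = δ := by
  simp [favouriteUtil, hi.symm]

lemma favouriteUtil_favourite {i : Fin n} (hi : f i ≠ i) : favouriteUtil f δ i (f i) = 1 := by
  simp [favouriteUtil, hi]

lemma favouriteUtil_of_ne {i j : Fin n} (hi : j ≠ i) (hf : j ≠ f i) :
    favouriteUtil f δ i j = 0 := by
  simp [favouriteUtil, hi, hf]

lemma favouriteUtil_nonneg (hδ : 0 ≤ δ) (i : Fin n) : 0 ≤ favouriteUtil f δ i :=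
  add_nonneg (Pi.single_nonneg.2 hδ) (Pi.single_nonneg.2 zero_le_one)

lemma pureUtil_favouriteUtil_le {i : Fin n} (hi : f i ≠ i) :
    (fun s => pureUtil (favouriteUtil f δ) s i) ≤
      δ • choiceInd i i + choiceInd (f i) (f i) - choiceInd i i * choiceInd (f i) (f i) := by
  intro s
  by_cases hvote : s i = some i
  · simp [pureUtil, guru_eq_some_of_votes hvote hvote, favouriteUtil_self hi, choiceInd, hvote]
  suffices pureUtil (favouriteUtil f δ) s i ≤ choiceInd (f i) (f i) s by
    simpa [choiceInd, hvote] using this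
  have hnonneg : 0 ≤ choiceInd (f i) (f i) s := by unfold choiceInd; positivity
  cases hg : guru s i with
  | none => simpa [pureUtil, hg] using hnonneg
  | some g =>
    have hgvote := votes_of_guru_eq_some hg
    have hgi : g ≠ i := by rintro rfl; exact hvote hgvote
    by_cases hgf : g = f i
    · subst hgf
      simp [pureUtil, hg, favouriteUtil_favourite hi, choiceInd, hgvote]
    · simpa [pureUtil, hg, favouriteUtil_of_ne hgi hgf] using hnonneg

lemma le_pureUtil_favouriteUtil (hδ : 0 ≤ δ) {i : Fin n} (hi : f i ≠ i) :
    δ • choiceInd i i + choiceInd i (f i) * choiceInd (f i) (f i) ≤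
      fun s => pureUtil (favouriteUtil f δ) s i := by
  intro s
  by_cases hvote : s i = some i
  · simp [pureUtil, guru_eq_some_of_votes hvote hvote, favouriteUtil_self hi, choiceInd, hvote,
      hi.symm]
  by_cases hdel : s i = some (f i) ∧ s (f i) = some (f i)
  · simp [pureUtil, guru_eq_some_of_votes hdel.1 hdel.2, favouriteUtil_favourite hi, choiceInd,
      hdel, hi]
  have hnonneg : 0 ≤ pureUtil (favouriteUtil f δ) s i := by
    cases hg : guru s i with
    | none => simp [pureUtil, hg]
    | some g => simpa [pureUtil, hg] using favouriteUtil_nonneg hδ i g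
  have hzero : choiceInd i (f i) s * choiceInd (f i) (f i) s = 0 := by
    rw [choiceInd, choiceInd, ite_zero_mul_ite_zero, if_neg hdel]
  simpa [choiceInd, hvote] using hzero.trans_le hnonneg

lemma util_favouriteUtil_le {x : Fin n → Fin n → ℝ} (hx : IsMixed x) {i : Fin n} (hi : f i ≠ i) :
    util (favouriteUtil f δ) x i ≤ δ * x i i + (1 - x i i) * x (f i) (f i) :=
  calc util (favouriteUtil f δ) x i
      ≤ expectation x
          (δ • choiceInd i i + choiceInd (f i) (f i) - choiceInd i i * choiceInd (f i) (f i)) := by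
        rw [util_eq_expectation]
        exact expectation_mono hx (pureUtil_favouriteUtil_le hi)
    _ = δ * x i i + (1 - x i i) * x (f i) (f i) := by
        rw [map_sub, map_add, map_smul, expectation_choiceInd_mul x hi.symm]
        simp only [expectation_choiceInd, smul_eq_mul]
        ring

lemma le_util_favouriteUtil (hδ : 0 ≤ δ) {x : Fin n → Fin n → ℝ} (hx : IsMixed x) {i : Fin n}
    (hi : f i ≠ i) :
    δ * x i i + x i (f i) * x (f i) (f i) ≤ util (favouriteUtil f δ) x i :=
  calc δ * x i i + x i (f i) * x (f i) (f i)
      = expectation x (δ • choiceInd i i + choiceInd i (f i) * choiceInd (f i) (f i)) := by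
        rw [map_add, map_smul, expectation_choiceInd_mul x hi.symm, expectation_choiceInd,
          smul_eq_mul]
    _ ≤ util (favouriteUtil f δ) x i := by
        rw [util_eq_expectation]
        exact expectation_mono hx (le_pureUtil_favouriteUtil hδ hi)

lemma voteOrFavourite_self {p : ℝ} {i : Fin n} (hi : f i ≠ i) : voteOrFavourite f p i i = p := by
  simp [voteOrFavourite, hi.symm]

lemma voteOrFavourite_favourite {p : ℝ} {i : Fin n} (hi : f i ≠ i) :
    voteOrFavourite f p i (f i) = 1 - p := by
  simp [voteOrFavourite, hi]

lemma voteOrFavourite_nonneg {p : ℝ} (hp0 : 0 ≤ p) (hp1 : p ≤ 1) (i : Fin n) :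
    0 ≤ voteOrFavourite f p i :=
  add_nonneg (Pi.single_nonneg.2 hp0) (Pi.single_nonneg.2 (sub_nonneg.2 hp1))

lemma isMixed_voteOrFavourite {p : ℝ} (hp0 : 0 ≤ p) (hp1 : p ≤ 1) :
    IsMixed (voteOrFavourite f p) := fun i =>
  ⟨voteOrFavourite_nonneg hp0 hp1 i, by simp [voteOrFavourite, sum_add_distrib]⟩

lemma util_update_voteOrFavourite_le (hf : ∀ i, f i ≠ i) (hδ0 : 0 ≤ δ) (hδ1 : δ ≤ 1) (i : Fin n)
    {y : Fin n → ℝ} (hy : IsStrat y) :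
    util (favouriteUtil f δ) (Function.update (voteOrFavourite f δ) i y) i ≤ δ := by
  have hmixed := (isMixed_voteOrFavourite (f := f) hδ0 hδ1).update i hy
  calc util (favouriteUtil f δ) (Function.update (voteOrFavourite f δ) i y) i
      ≤ δ * y i + (1 - y i) * δ := by
        simpa only [Function.update_self, Function.update_of_ne (hf i), voteOrFavourite_self (hf _)]
          using util_favouriteUtil_le (δ := δ) hmixed (hf i)
    _ = δ := by ring

lemma util_voteOrFavourite (hf : ∀ i, f i ≠ i) (hδ0 : 0 ≤ δ) (hδ1 : δ ≤ 1) (i : Fin n) :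
    util (favouriteUtil f δ) (voteOrFavourite f δ) i = δ := by
  have hmixed : IsMixed (voteOrFavourite f δ) := isMixed_voteOrFavourite hδ0 hδ1
  apply le_antisymm
  · simpa only [Function.update_eq_self] using
      util_update_voteOrFavourite_le hf hδ0 hδ1 i (hmixed i)
  · calc δ = δ * δ + (1 - δ) * δ := by ring
      _ ≤ util (favouriteUtil f δ) (voteOrFavourite f δ) i := by
        simpa only [voteOrFavourite_self (hf _), voteOrFavourite_favourite (hf _)] using
          le_util_favouriteUtil hδ0 hmixed (hf i)

lemma nashEq_voteOrFavourite (hf : ∀ i, f i ≠ i) (hδ0 : 0 ≤ δ) (hδ1 : δ ≤ 1) :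
    NashEq (favouriteUtil f δ) (voteOrFavourite f δ) := fun i _ hy =>
  (util_update_voteOrFavourite_le hf hδ0 hδ1 i hy).trans_eq
    (util_voteOrFavourite hf hδ0 hδ1 i).symm

end Favourite

section Cyclic

variable {δ : ℝ}

lemma fin_add_one_ne_self {n : ℕ} (i : Fin (n + 2)) : i + 1 ≠ i :=
  add_ne_left.2 one_ne_zero

lemma cyclic_sum_le {a b c : ℝ} (ha : a ∈ Set.Icc 0 1) (hb : b ∈ Set.Icc 0 1)
    (hc : c ∈ Set.Icc 0 1) (hδ : δ ∈ Set.Icc 0 1) :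
    (δ * a + (1 - a) * b) + (δ * b + (1 - b) * c) + (δ * c + (1 - c) * a) ≤ 1 + 2 * δ := by
  have ha' := sub_nonneg.2 ha.2
  have hb' := sub_nonneg.2 hb.2
  have hc' := sub_nonneg.2 hc.2
  have habc : 0 ≤ a * b * c := mul_nonneg (mul_nonneg ha.1 hb.1) hc.1
  have hsum : a + b + c - 2 ≤ a * b * c := by
    have hab : 0 ≤ (1 - a) * (1 - b) := mul_nonneg ha' hb'
    have hab_c : 0 ≤ (1 - a * b) * (1 - c) :=
      mul_nonneg (sub_nonneg.2 (mul_le_one₀ ha.2 hb.1 hb.2)) hc'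
    linarith
  have hδsum : δ * (a + b + c - 2) ≤ a * b * c :=
    (mul_le_mul_of_nonneg_left hsum hδ.1).trans (mul_le_of_le_one_left habc hδ.2)
  calc (δ * a + (1 - a) * b) + (δ * b + (1 - b) * c) + (δ * c + (1 - c) * a)
      = 1 + 2 * δ + (δ * (a + b + c - 2) - a * b * c) - (1 - a) * (1 - b) * (1 - c) := by ring
    _ ≤ 1 + 2 * δ := by linarith [mul_nonneg (mul_nonneg ha' hb') hc']

lemma SW_cyclic_le (hδ : δ ∈ Set.Icc 0 1) {x : Fin 3 → Fin 3 → ℝ} (hx : IsMixed x) :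
    SW (favouriteUtil (· + 1) δ) x ≤ 1 + 2 * δ := by
  have hvote (i : Fin 3) : x i i ∈ Set.Icc (0 : ℝ) 1 := ⟨(hx i).1 i, (hx i).apply_le_one i⟩
  calc SW (favouriteUtil (· + 1) δ) x
      ≤ ∑ i, (δ * x i i + (1 - x i i) * x (i + 1) (i + 1)) :=
        sum_le_sum fun i _ => util_favouriteUtil_le hx (fin_add_one_ne_self i)
    _ = (δ * x 0 0 + (1 - x 0 0) * x 1 1) + (δ * x 1 1 + (1 - x 1 1) * x 2 2)
          + (δ * x 2 2 + (1 - x 2 2) * x 0 0) := Fin.sum_univ_three _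
    _ ≤ 1 + 2 * δ := cyclic_sum_le (hvote 0) (hvote 1) (hvote 2) hδ

lemma isGreatest_SWvals_cyclic (hδ : δ ∈ Set.Icc 0 1) :
    IsGreatest (SWvals (favouriteUtil (fun i : Fin 3 => i + 1) δ)) (1 + 2 * δ) := by
  refine ⟨?_, fun w ⟨x, hx, hw⟩ => hw ▸ SW_cyclic_le hδ hx⟩
  let c : Fin 3 → Fin 3 := ![0, 1, 0]
  let x : Fin 3 → Fin 3 → ℝ := fun i => Pi.single (c i) 1
  have hx : IsMixed x := fun i => isStrat_single (c i)
  refine ⟨x, hx, le_antisymm ?_ (SW_cyclic_le hδ hx)⟩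
  calc 1 + 2 * δ = ∑ i, (δ * x i i + x i (i + 1) * x (i + 1) (i + 1)) := by
        simp [x, c, Fin.sum_univ_three]
        ring
    _ ≤ SW (favouriteUtil (· + 1) δ) x :=
        sum_le_sum fun i _ =>
          le_util_favouriteUtil (f := (· + 1)) hδ.1 hx (fin_add_one_ne_self i)

end Cyclic

/-- In the 3-agent game with utilities u₁ = (δ,1,0), u₂ = (0,δ,1), u₃ = (1,0,δ),
the profile x₁ = (δ,1-δ,0), x₂ = (0,δ,1-δ), x₃ = (1-δ,0,δ) is a mixed Nash
equilibrium in which every agent has expected utility δ, so SW(x) = 3δ;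
moreover OPT = 1 + 2δ. -/
theorem stmt1 (δ : ℝ) (hδ0 : 0 < δ) (hδ1 : δ < 1)
    (u : Fin 3 → Fin 3 → ℝ) (hu : u = ![![δ, 1, 0], ![0, δ, 1], ![1, 0, δ]])
    (x : Fin 3 → Fin 3 → ℝ)
    (hx : x = ![![δ, 1-δ, 0], ![0, δ, 1-δ], ![1-δ, 0, δ]]) :
    IsMixed x ∧ NashEq u x ∧ (∀ i, util u x i = δ) ∧ SW u x = 3 * δ ∧
      IsGreatest (SWvals u) (1 + 2 * δ) := by
  have hu' : u = favouriteUtil (· + 1) δ := by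
    ext i j
    fin_cases i <;> fin_cases j <;> simp [hu, favouriteUtil]
  have hx' : x = voteOrFavourite (· + 1) δ := by
    ext i j
    fin_cases i <;> fin_cases j <;> simp [hx, voteOrFavourite]
  have hutil (i : Fin 3) : util u x i = δ := by
    rw [hu', hx']
    exact util_voteOrFavourite fin_add_one_ne_self hδ0.le hδ1.le i
  refine ⟨?_, ?_, hutil, ?_, ?_⟩
  · exact hx' ▸ isMixed_voteOrFavourite hδ0.le hδ1.le
  · exact hu' ▸ hx' ▸ nashEq_voteOrFavourite fin_add_one_ne_self hδ0.le hδ1.le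
  · simp [SW, hutil]
  · exact hu' ▸ isGreatest_SWvals_cyclic ⟨hδ0.le, hδ1.le⟩
end

section
/- In any liquid democracy game, abstaining is weakly dominated: for every mixed profile x and every agent i there exists a mixed strategy x̂_i with Σ_j x̂_{ij} = 1 (i abstains with probability 0) such that u_i(x̂_i, x_{−i}) ≥ u_i(x_i, x_{−i}). -/
/-!
Move all of agent `i`'s abstention probability onto voting herself. A pure profile in which `i`
abstains gives her utility `0`. In every other one her utility is nonnegative, and its probability
has not decreased, because no entry of `x i` has. So the expected utilities compare term by term.
-/

open Finset

section

variable {n : ℕ} {u x : Fin n → Fin n → ℝ} {s : Fin n → Option (Fin n)} {i : Fin n} {y : Fin n → ℝ}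

lemma guru_eq_none_of_abstain (hs : s i = none) : guru s i = none := by
  cases n with
  | zero => exact i.elim0
  | succ m =>
    have none_fixed : (fun o => Option.bind o s)^[m] none = none := Function.iterate_fixed rfl m
    simp only [guru, Function.iterate_succ_apply, Option.bind_some, hs, none_fixed,
      Option.bind_none]

lemma pureUtil_eq_zero_of_abstain (u : Fin n → Fin n → ℝ) (hs : s i = none) :
    pureUtil u s i = 0 := by
  rw [pureUtil, guru_eq_none_of_abstain hs, Option.elim_none]

lemma pureUtil_nonneg (hu : ∀ j, 0 ≤ u i j) (s : Fin n → Option (Fin n)) :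
    0 ≤ pureUtil u s i := by
  unfold pureUtil
  cases guru s i with
  | none => exact le_rfl
  | some j => exact hu j

lemma IsStrat.elim_nonneg (hy : IsStrat y) (o : Option (Fin n)) :
    0 ≤ o.elim (1 - ∑ j, y j) y := by
  cases o with
  | none => exact sub_nonneg.2 hy.2
  | some j => exact hy.1 j

lemma prob_le_prob_update (hx : IsMixed x) (hxy : x i ≤ y) (hs : s i ≠ none) :
    prob x s ≤ prob (Function.update x i y) s := by
  refine Finset.prod_le_prod (fun k _ => (hx k).elim_nonneg (s k)) fun k _ => ?_
  obtain rfl | hk := eq_or_ne k i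
  · obtain ⟨j, hj⟩ := Option.ne_none_iff_exists'.1 hs
    simpa only [hj, Option.elim_some, Function.update_self] using hxy j
  · rw [Function.update_of_ne hk]

lemma util_le_util_update (hu : ∀ j, 0 ≤ u i j) (hx : IsMixed x) (hxy : x i ≤ y) :
    util u x i ≤ util u (Function.update x i y) i := by
  refine Finset.sum_le_sum fun s _ => ?_
  by_cases hs : s i = none
  · simp only [pureUtil_eq_zero_of_abstain u hs, mul_zero, le_refl]
  · exact mul_le_mul_of_nonneg_right (prob_le_prob_update hx hxy hs) (pureUtil_nonneg hu s)

/-- The strategy obtained from `y` by moving the abstention probability onto the choice `i`; for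
the strategy of agent `i` herself this means that she votes whenever she would have abstained. -/
def moveAbstentionTo (i : Fin n) (y : Fin n → ℝ) : Fin n → ℝ :=
  y + Pi.single i (1 - ∑ j, y j)

lemma sum_moveAbstentionTo (i : Fin n) (y : Fin n → ℝ) : ∑ j, moveAbstentionTo i y j = 1 := by
  simp [moveAbstentionTo, Finset.sum_add_distrib]

lemma IsStrat.le_moveAbstentionTo (hy : IsStrat y) (i : Fin n) : y ≤ moveAbstentionTo i y :=
  le_add_of_nonneg_right (Pi.single_nonneg.2 (sub_nonneg.2 hy.2))

end

theorem stmt3_general {n : ℕ} (u x : Fin n → Fin n → ℝ) (i : Fin n) (hu : ∀ j, 0 ≤ u i j)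
    (hx : IsMixed x) :
    ∃ y : Fin n → ℝ, (∀ j, 0 ≤ y j) ∧ (∑ j, y j) = 1 ∧
      util u (Function.update x i y) i ≥ util u x i := by
  have hle : x i ≤ moveAbstentionTo i (x i) := (hx i).le_moveAbstentionTo i
  exact ⟨moveAbstentionTo i (x i), fun j => ((hx i).1 j).trans (hle j),
    sum_moveAbstentionTo i (x i), util_le_util_update hu hx hle⟩

/-- Abstaining is weakly dominated: for every mixed profile x and agent i there is
a mixed strategy x̂ᵢ with total probability 1 (no abstention) that does at least
as well against x₋ᵢ. -/
theorem stmt3 {n : ℕ} (u : Fin n → Fin n → ℝ) (hu : ∀ i j, 0 ≤ u i j ∧ u i j ≤ 1)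
    (x : Fin n → Fin n → ℝ) (hx : IsMixed x) (i : Fin n) :
    ∃ y : Fin n → ℝ, (∀ j, 0 ≤ y j) ∧ (∑ j, y j) = 1 ∧
      util u (Function.update x i y) i ≥ util u x i :=
  stmt3_general u x i (fun j => (hu i j).1) hx
end

section
/- Fixed point existence (Theorem 4): For every ε ∈ [0,1], every liquid democracy game, and every subset D* ⊆ V of agents, there exists a mixed strategy profile x such that (a) for every i ∈ D*, x_i is a best response to x_{−i} among the restricted strategies S^R_i = { x_i ∈ R_+^n : Σ_j x_{ij} = 1 and x_{ii} ≥ ε }, i.e., u_i(x_i, x_{−i}) ≥ u_i(x̂_i, x_{−i}) for all x̂_i ∈ S^R_i, and (b) for every j ∉ D*, x_j is a best response to x_{−j} among all non-abstaining mixed strategies S_j = { x_j ∈ R_+^n : Σ_k x_{jk} = 1 }. -/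
/-!
Each agent's expected utility is affine in her own strategy and continuous in the profile, so the
claim is an instance of Nash's theorem for concave games, with the feasible strategies as compact
convex action sets. That theorem is Ky Fan's inequality for the function `φ x y = ∑ i, f i (x with
x i replaced by y i)`: a point `x` at which `y = x` maximises `φ x` is an equilibrium.

Ky Fan's inequality reduces by compactness to finitely many competitors `y i`, and then to the
following covering theorem, in which `C i` consists of the weights `x` for which `y i` is best: if
closed sets `C i` cover the standard simplex, then some point `x` lies in `C i` for every `i` with
`x i ≠ 0`. This is obtained from Scarf's lemma, a parity argument on finitely many linear orders,
applied to the coordinate orders on the points of ever finer grids, coloured by the sets `C i` in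
which they lie.
-/

open Finset

/-! ### Scarf's lemma -/

section Parity

variable {β γ : Type*}

theorem even_card_of_existsUnique_ne {s : Finset β} (h : ∀ x ∈ s, ∃! y, y ∈ s ∧ y ≠ x) :
    Even #s := by
  classical
  rcases s.eq_empty_or_nonempty with rfl | ⟨x, hx⟩
  · simp
  obtain ⟨y, ⟨hy, hyx⟩, huniq⟩ := h x hx
  have hs : s = {x, y} := by
    ext z
    have := huniq z
    grind
  rw [hs, card_pair hyx.symm]
  exact even_two

theorem exists_odd_card_bipartiteAbove (r : β → γ → Prop) [∀ a b, Decidable (r a b)]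
    {R : Finset β} {E : Finset γ} {e₀ : γ} (he₀ : e₀ ∈ E) (hodd : Odd #(R.bipartiteBelow r e₀))
    (heven : ∀ e ∈ E, e ≠ e₀ → Even #(R.bipartiteBelow r e)) :
    ∃ a ∈ R, Odd #(E.bipartiteAbove r a) := by
  classical
  by_contra! hno
  have hL : Even (∑ a ∈ R, #(E.bipartiteAbove r a)) :=
    even_sum _ fun a ha => Nat.not_odd_iff_even.1 (hno a ha)
  have hR : Even (∑ e ∈ E.erase e₀, #(R.bipartiteBelow r e)) :=
    even_sum _ fun e he => heven e (mem_of_mem_erase he) (ne_of_mem_erase he)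
  rw [sum_card_bipartiteAbove_eq_sum_card_bipartiteBelow, ← add_sum_erase _ _ he₀] at hL
  exact Nat.not_even_iff_odd.2 (hodd.add_even hR) hL

/-- The other subset arises from `τ` by exchanging the element of the same colour as the element of
`S` missing from `τ`. -/
theorem existsUnique_bijOn_ne {c : β → γ} {S τ : Finset β} {C : Finset γ}
    (hS : Set.MapsTo c S C) (hcard : #τ + 1 = #S) (hτS : τ ⊆ S) (hτ : Set.BijOn c τ C) :
    ∃! τ', (τ' ⊆ S ∧ Set.BijOn c τ' C) ∧ τ' ≠ τ := by
  classical
  obtain ⟨x, hx, rfl⟩ := exists_eq_insert_iff.2 ⟨hτS, hcard⟩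
  obtain ⟨y, hy, hyx⟩ := hτ.surjOn (hS (mem_insert_self x τ))
  have hy : y ∈ τ := hy
  have hxy : x ≠ y := fun h => hx (h ▸ hy)
  have hcard' : #(insert x (τ.erase y)) = #τ := by
    rw [card_insert_of_notMem fun h => hx (mem_of_mem_erase h), card_erase_add_one hy]
  refine ⟨insert x (τ.erase y), ⟨⟨insert_subset_insert x (erase_subset y τ), ?_, ?_, ?_⟩, ?_⟩, ?_⟩
  · exact hS.mono_left (by exact_mod_cast insert_subset_insert x (erase_subset y τ))
  · have := hτ.injOn
    simp only [Set.InjOn, mem_coe, mem_insert, mem_erase] at this ⊢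
    grind
  · intro i hi
    obtain ⟨z, hz, rfl⟩ := hτ.surjOn hi
    by_cases hzy : z = y
    · exact ⟨x, by simp, by rw [hzy, hyx]⟩
    · exact ⟨z, by simpa [hzy] using Or.inr hz, rfl⟩
  · exact fun h => hx (h ▸ mem_insert_self x _)
  · rintro τ' ⟨⟨hτ'S, hτ'⟩, hne⟩
    have hcτ : #τ' = #τ := by rw [hτ'.finsetCard_eq, hτ.finsetCard_eq]
    have hxτ' : x ∈ τ' := by
      by_contra hxτ'
      exact hne (eq_of_subset_of_card_le ((subset_insert_iff_of_notMem hxτ').1 hτ'S) hcτ.ge)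
    have hyτ' : y ∉ τ' := fun hyτ' => hxy (hτ'.injOn hxτ' hyτ' hyx.symm)
    exact eq_of_subset_of_card_le (fun z hz => by grind) (by rw [hcτ, hcard'])

theorem mapsTo_erase_of_not_surjOn [Fintype γ] [DecidableEq γ] {c : β → γ} {S : Set β} {i : γ}
    (hi : Set.SurjOn c S (univ.erase i : Finset γ)) (hS : ¬ Set.SurjOn c S Set.univ) :
    Set.MapsTo c S (univ.erase i : Finset γ) := by
  intro x hx
  refine mem_coe.2 (mem_erase.2 ⟨fun hxi => hS fun j _ => ?_, mem_univ _⟩)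
  rcases eq_or_ne j i with rfl | hj
  · exact ⟨x, hx, hxi⟩
  · exact hi (mem_coe.2 (mem_erase.2 ⟨hj, mem_univ j⟩))

end Parity

section Scarf

variable {ι X α : Type*} [LinearOrder α]

/-- A set `S` is dominant for the orders on `X` given by the functions `F i` if every `y` is, for
some `i`, a lower bound of `S` in the `i`-th order. -/
def Dominant (F : ι → X → α) (S : Finset X) : Prop :=
  ∀ y, ∃ i, ∀ x ∈ S, F i y ≤ F i x

/-- `x` is an element of `S` at which `f` attains its minimum on `S`. -/
def IsArgmin (f : X → α) (S : Finset X) (x : X) : Prop :=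
  x ∈ S ∧ ∀ y ∈ S, f x ≤ f y

/-- Scarf's rooms, which play the part of the maximal simplices of a triangulation: dominant sets
with as many elements as there are orders. -/
def IsRoom [Fintype ι] (F : ι → X → α) (S : Finset X) : Prop :=
  Dominant F S ∧ #S = Fintype.card ι

/-- `x` is the `F k`-largest of the elements that lie above `a l` in the `l`-th order for all
`l ≠ k`. This describes the element completing a facet to a room when `a` lists the minima of the
facet. -/
def IsPivot (F : ι → X → α) (a : ι → X) (k : ι) (x : X) : Prop :=
  (∀ l ≠ k, F l (a l) < F l x) ∧ ∀ y, (∀ l ≠ k, F l (a l) < F l y) → F k y ≤ F k x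

/-- The elements `s i` bound the orders like the facets of a simplex bound its points: `s i` is the
bottom element of the `i`-th order, in which all other `s j` lie above every proper element. -/
structure IsSlack (F : ι → X → α) (s : ι → X) : Prop where
  lt_of_ne : ∀ i x, x ≠ s i → F i (s i) < F i x
  lt_of_notMem_range : ∀ i j x, j ≠ i → x ∉ Set.range s → F i x < F i (s j)

variable {F : ι → X → α} {S τ : Finset X} {a b s : ι → X} {k : ι} {t x y : X}

theorem Dominant.mono (hS : Dominant F S) (hτ : τ ⊆ S) : Dominant F τ :=
  fun y => (hS y).imp fun _ hi x hx => hi x (hτ hx)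

theorem exists_isArgmin {f : X → α} (hS : S.Nonempty) : ∃ x, IsArgmin f S x :=
  S.exists_min_image f hS

theorem IsArgmin.eq {f : X → α} (hf : Function.Injective f) (hx : IsArgmin f S x)
    (hy : IsArgmin f S y) : x = y :=
  hf (le_antisymm (hx.2 y hy.1) (hy.2 x hx.1))

theorem IsArgmin.mono {f : X → α} (hx : IsArgmin f S x) (hτ : τ ⊆ S) (hxτ : x ∈ τ) :
    IsArgmin f τ x :=
  ⟨hxτ, fun y hy => hx.2 y (hτ hy)⟩

theorem IsPivot.eq (hF : ∀ i, Function.Injective (F i)) (hx : IsPivot F a k x)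
    (hy : IsPivot F a k y) : x = y :=
  hF k (le_antisymm (hy.2 x hx.1) (hx.2 y hy.1))

theorem IsPivot.congr (hx : IsPivot F a k x) (hab : ∀ l ≠ k, a l = b l) : IsPivot F b k x := by
  have h : ∀ y, (∀ l ≠ k, F l (b l) < F l y) ↔ ∀ l ≠ k, F l (a l) < F l y := fun y =>
    forall₂_congr fun l hl => by rw [hab l hl]
  exact ⟨(h x).2 hx.1, fun y hy => hx.2 y ((h y).1 hy)⟩

theorem exists_isPivot [Finite X] (hy : ∀ l ≠ k, F l (a l) < F l y) : ∃ x, IsPivot F a k x :=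
  Set.exists_max_image {y | ∀ l ≠ k, F l (a l) < F l y} (F k) (Set.toFinite _) ⟨y, hy⟩

theorem IsPivot.notMem (hx : IsPivot F a k x) (hτ : Set.SurjOn a {k}ᶜ τ) : x ∉ τ := by
  intro hxτ
  obtain ⟨l, hl, rfl⟩ := hτ hxτ
  exact lt_irrefl _ (hx.1 l hl)

theorem IsPivot.dominant_insert [DecidableEq X] (hx : IsPivot F a k x) (hτ : Dominant F τ)
    (ha : ∀ l ≠ k, IsArgmin (F l) τ (a l)) : Dominant F (insert x τ) := by
  have hxτ : ∀ z ∈ τ, F k x ≤ F k z := by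
    obtain ⟨l, hl⟩ := hτ x
    rcases eq_or_ne l k with rfl | hlk
    · exact hl
    · exact absurd (hl _ (ha l hlk).1) (hx.1 l hlk).not_ge
  intro y
  by_cases hy : ∀ l ≠ k, F l (a l) < F l y
  · exact ⟨k, (forall_mem_insert _ _ _).2
      ⟨hx.2 y hy, fun z hz => (hx.2 y hy).trans (hxτ z hz)⟩⟩
  · push Not at hy
    obtain ⟨l, hlk, hyl⟩ := hy
    exact ⟨l, (forall_mem_insert _ _ _).2
      ⟨hyl.trans (hx.1 l hlk).le, fun z hz => hyl.trans ((ha l hlk).2 z hz)⟩⟩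

theorem Dominant.isPivot_of_isArgmin (hF : ∀ i, Function.Injective (F i)) (hS : Dominant F S)
    (hb : ∀ l, IsArgmin (F l) S (b l)) (hinj : Function.Injective b) (k : ι) :
    IsPivot F b k (b k) := by
  refine ⟨fun l hl => ((hb l).2 _ (hb k).1).lt_of_ne fun h => hl (hinj (hF l h)), fun y hy => ?_⟩
  obtain ⟨l, hl⟩ := hS y
  rcases eq_or_ne l k with rfl | hlk
  · exact hl _ (hb l).1
  · exact absurd (hl _ (hb l).1) (hy l hlk).not_ge

theorem IsSlack.injective (hs : IsSlack F s) (ht : t ∉ Set.range s) : Function.Injective s := by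
  intro i j hij
  by_contra hne
  have h₁ : F i t < F i (s i) := hij ▸ hs.lt_of_notMem_range i j t (Ne.symm hne) ht
  exact lt_asymm h₁ (hs.lt_of_ne i t fun h => ht ⟨i, h.symm⟩)

theorem IsSlack.isArgmin (hs : IsSlack F s) {i : ι} (hi : s i ∈ S) : IsArgmin (F i) S (s i) :=
  ⟨hi, fun x _ => by
    rcases eq_or_ne x (s i) with rfl | hx
    · exact le_rfl
    · exact (hs.lt_of_ne i x hx).le⟩

theorem exists_notMem_range_of_bijOn [DecidableEq X] {c : X → ι} (hc : Function.LeftInverse c s)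
    {C : Finset ι} (hτ : Set.BijOn c τ C) (hne : τ ≠ C.image s) :
    ∃ x ∈ τ, x ∉ Set.range s := by
  by_contra! hall
  have hsub : τ ⊆ C.image s := fun x hx => by
    obtain ⟨l, rfl⟩ := hall x hx
    exact mem_image_of_mem s (hc l ▸ hτ.mapsTo hx)
  exact hne (eq_of_subset_of_card_le hsub (hτ.finsetCard_eq ▸ card_image_le))

variable [Fintype ι]

theorem IsRoom.exists_bijOn_argmin (hF : ∀ i, Function.Injective (F i)) (hS : IsRoom F S) :
    ∃ b : ι → X, (∀ l, IsArgmin (F l) S (b l)) ∧ Set.BijOn b Set.univ S := by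
  classical
  have hne (i : ι) : S.Nonempty := card_pos.1 (hS.2 ▸ Fintype.card_pos_iff.2 ⟨i⟩)
  choose b hb using fun l => exists_isArgmin (f := F l) (hne l)
  have himage : univ.image b = S := by
    ext x
    refine ⟨fun hx => ?_, fun hx => ?_⟩
    · obtain ⟨l, -, rfl⟩ := mem_image.1 hx
      exact (hb l).1
    · obtain ⟨i, hi⟩ := hS.1 x
      exact mem_image.2 ⟨i, mem_univ i, (hb i).eq (hF i) ⟨hx, hi⟩⟩
  have hinj : Set.InjOn b (univ : Finset ι) := card_image_iff.1 (by rw [himage, hS.2, card_univ])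
  refine ⟨b, hb, ?_⟩
  rw [← himage, coe_image, ← coe_univ]
  exact hinj.bijOn_image

theorem IsRoom.exists_isPivot_of_insert [DecidableEq X] (hF : ∀ i, Function.Injective (F i))
    (hroom : IsRoom F (insert x τ)) (hx : x ∉ τ) (ha : ∀ l, IsArgmin (F l) τ (a l)) :
    ∃ k, IsPivot F a k x ∧ Set.BijOn a {k}ᶜ τ := by
  obtain ⟨b, hb, hbij⟩ := hroom.exists_bijOn_argmin hF
  have hinj : Function.Injective b := Set.injOn_univ.1 hbij.injOn
  obtain ⟨k, -, rfl⟩ := hbij.surjOn (mem_insert_self x τ)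
  have hba : ∀ l ≠ k, b l = a l := fun l hl =>
    have hbτ : b l ∈ τ := mem_of_mem_insert_of_ne (hb l).1 (hinj.ne hl)
    ((hb l).mono (subset_insert _ _) hbτ).eq (hF l) (ha l)
  refine ⟨k, (hroom.1.isPivot_of_isArgmin hF hb hinj k).congr hba,
    fun l _ => (ha l).1, fun l hl m hm hlm => hinj ?_, fun z hz => ?_⟩
  · rw [hba l hl, hba m hm, hlm]
  · obtain ⟨l, -, rfl⟩ := hbij.surjOn (mem_insert_of_mem hz)
    have hl : l ≠ k := by
      rintro rfl
      exact hx hz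
    exact ⟨l, hl, (hba l hl).symm⟩

variable [Finite X]

/-- Dropping an element from a room, two of the minima `a` of the remaining facet `τ` coincide, say
`a k = a j`. The rooms containing `τ` are obtained by adding the pivot at `k` or at `j`. -/
theorem IsRoom.existsUnique_ne (hF : ∀ i, Function.Injective (F i)) (hs : IsSlack F s)
    (hS : IsRoom F S) (hτS : τ ⊆ S) (hcard : #τ + 1 = #S) (ht : t ∈ τ)
    (hts : t ∉ Set.range s) :
    ∃! R, (IsRoom F R ∧ τ ⊆ R) ∧ R ≠ S := by
  classical
  obtain ⟨x, hx, rfl⟩ := exists_eq_insert_iff.2 ⟨hτS, hcard⟩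
  have hτ : Dominant F τ := hS.1.mono hτS
  choose a ha using fun l => exists_isArgmin (f := F l) ⟨t, ht⟩
  obtain ⟨k, hxk, hbij⟩ := hS.exists_isPivot_of_insert hF hx ha
  obtain ⟨j, hjk : j ≠ k, hjk'⟩ := hbij.surjOn (ha k).1
  have hsurj : Set.SurjOn a {j}ᶜ τ := fun z hz => by
    obtain ⟨l, -, rfl⟩ := hbij.surjOn hz
    rcases eq_or_ne l j with rfl | hl
    · exact ⟨k, hjk.symm, hjk'.symm⟩
    · exact ⟨l, hl, rfl⟩
  obtain ⟨y, hyj⟩ := exists_isPivot (F := F) (a := a) (k := j) (y := s j) fun l hl =>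
    ((ha l).2 t ht).trans_lt (hs.lt_of_notMem_range l j t hl.symm hts)
  have hy : y ∉ τ := hyj.notMem hsurj
  have hyx : y ≠ x := by
    rintro rfl
    obtain ⟨l, hl⟩ := hτ y
    rcases eq_or_ne l j with rfl | hlj
    · exact (hxk.1 l hjk).not_ge (hl _ (ha l).1)
    · exact (hyj.1 l hlj).not_ge (hl _ (ha l).1)
  refine ⟨insert y τ, ⟨⟨⟨hyj.dominant_insert hτ fun l _ => ha l, ?_⟩, subset_insert y τ⟩,
    fun h => hyx ((insert_inj hy).1 h)⟩, ?_⟩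
  · rw [card_insert_of_notMem hy, hcard, hS.2]
  · rintro R ⟨⟨hR, hτR⟩, hne⟩
    obtain ⟨z, hz, rfl⟩ := exists_eq_insert_iff.2 ⟨hτR, by rw [hcard, hS.2, hR.2]⟩
    obtain ⟨m, hzm, hbij'⟩ := hR.exists_isPivot_of_insert hF hz ha
    rcases eq_or_ne m k with rfl | hmk
    · exact absurd (by rw [hzm.eq hF hxk]) hne
    rcases eq_or_ne m j with rfl | hmj
    · rw [hzm.eq hF hyj]
    · exact absurd (hbij'.injOn hmj.symm hmk.symm hjk') hjk

theorem IsSlack.existsUnique_isRoom [DecidableEq ι] [DecidableEq X]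
    (hF : ∀ i, Function.Injective (F i)) (hs : IsSlack F s) (ht : t ∉ Set.range s) (i : ι) :
    ∃! S, IsRoom F S ∧ (univ.erase i).image s ⊆ S := by
  set τ := (univ.erase i).image s
  have hmem : ∀ l ≠ i, s l ∈ τ := fun l hl => mem_image_of_mem s (mem_erase.2 ⟨hl, mem_univ l⟩)
  have hcard : #τ + 1 = Fintype.card ι := by
    rw [card_image_of_injective _ (hs.injective ht), card_erase_add_one (mem_univ i), card_univ]
  have hdom : Dominant F τ := by
    intro y
    by_cases hy : y ∈ Set.range s
    · obtain ⟨l, rfl⟩ := hy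
      exact ⟨l, fun x _ => (hs.isArgmin (mem_insert_self (s l) {x})).2 x (by simp)⟩
    · refine ⟨i, fun x hx => ?_⟩
      obtain ⟨l, hl, rfl⟩ := mem_image.1 hx
      exact (hs.lt_of_notMem_range i l y (ne_of_mem_erase hl) hy).le
  have hargmin : ∀ l ≠ i, IsArgmin (F l) τ (s l) := fun l hl => hs.isArgmin (hmem l hl)
  obtain ⟨x, hx⟩ := exists_isPivot (F := F) (a := s) (k := i) (y := t) fun l _ =>
    hs.lt_of_ne l t fun h => ht ⟨l, h.symm⟩
  have hxτ : x ∉ τ := hx.notMem fun z hz => by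
    obtain ⟨l, hl, rfl⟩ := mem_image.1 hz
    exact ⟨l, ne_of_mem_erase hl, rfl⟩
  have hcard' : #(insert x τ) = Fintype.card ι := by rw [card_insert_of_notMem hxτ, hcard]
  refine ⟨insert x τ, ⟨⟨hx.dominant_insert hdom hargmin, hcard'⟩, subset_insert x τ⟩, ?_⟩
  rintro S ⟨hS, hτS⟩
  obtain ⟨b, hb, hbij⟩ := hS.exists_bijOn_argmin hF
  have hbs : ∀ l ≠ i, b l = s l := fun l hl =>
    (hb l).eq (hF l) (hs.isArgmin (hτS (hmem l hl)))
  have hbx : b i = x :=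
    ((hS.1.isPivot_of_isArgmin hF hb (Set.injOn_univ.1 hbij.injOn) i).congr hbs).eq hF hx
  exact (eq_of_subset_of_card_le (insert_subset (hbx ▸ (hb i).1) hτS) (by rw [hcard', hS.2])).symm

/-- Count the inclusions `τ ⊆ S` of sets carrying all colours except `i` into rooms. The slack
elements other than `s i` form such a set `τ` and lie in one room, every other `τ` lies in two, and
a room that misses a colour contains no such `τ` or two of them. -/
theorem exists_isRoom_surjOn [Nonempty ι] (hF : ∀ i, Function.Injective (F i))
    (hs : IsSlack F s) (ht : t ∉ Set.range s) {c : X → ι} (hc : Function.LeftInverse c s) :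
    ∃ S, IsRoom F S ∧ Set.SurjOn c S Set.univ := by
  classical
  have := Fintype.ofFinite X
  obtain ⟨i⟩ := ‹Nonempty ι›
  let R : Finset (Finset X) := {S | IsRoom F S}
  let E : Finset (Finset X) := {τ | Set.BijOn c τ (univ.erase i : Finset ι)}
  have hcard : ∀ τ ∈ E, #τ + 1 = Fintype.card ι := fun τ hτ => by
    rw [((mem_filter_univ τ).1 hτ).finsetCard_eq, card_erase_add_one (mem_univ i), card_univ]
  have hstart : (univ.erase i).image s ∈ E := by
    rw [mem_filter_univ, coe_image]
    exact (hc.injective.injOn.bijOn_image).symm ⟨(hc.leftInvOn _).rightInvOn_image, hc.leftInvOn _⟩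
  have hone : #(R.bipartiteBelow (fun S τ => τ ⊆ S) ((univ.erase i).image s)) = 1 := by
    rw [card_eq_one, singleton_iff_unique_mem]
    simpa only [R, mem_bipartiteBelow, mem_filter_univ] using hs.existsUnique_isRoom hF ht i
  have heven : ∀ τ ∈ E, τ ≠ (univ.erase i).image s →
      Even #(R.bipartiteBelow (fun S τ => τ ⊆ S) τ) := fun τ hτ hne => by
    obtain ⟨x, hx, hxs⟩ := exists_notMem_range_of_bijOn hc ((mem_filter_univ τ).1 hτ) hne
    refine even_card_of_existsUnique_ne fun S hS => ?_
    simp only [R, mem_bipartiteBelow, mem_filter_univ] at hS ⊢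
    exact hS.1.existsUnique_ne hF hs hS.2 (by rw [hcard τ hτ, hS.1.2]) hx hxs
  obtain ⟨S, hS, hodd⟩ := exists_odd_card_bipartiteAbove _ hstart (hone ▸ odd_one) heven
  rw [mem_filter_univ] at hS
  refine ⟨S, hS, ?_⟩
  by_contra hsurj
  refine Nat.not_even_iff_odd.2 hodd (even_card_of_existsUnique_ne fun τ hτ => ?_)
  simp only [E, mem_bipartiteAbove, mem_filter_univ] at hτ ⊢
  have hmaps : Set.MapsTo c S (univ.erase i : Finset ι) :=
    mapsTo_erase_of_not_surjOn (hτ.1.surjOn.mono (coe_subset.2 hτ.2) subset_rfl) hsurj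
  have := existsUnique_bijOn_ne hmaps (by rw [hcard τ (by simpa [E] using hτ.1), hS.2]) hτ.2 hτ.1
  simpa only [and_comm] using this

end Scarf

section TieBreak

variable {ι X α : Type*} [LinearOrder α] [Finite ι] [Nonempty ι] [Finite X]
  {F : ι → X → α} {s : ι → X} {t : X} {c : X → ι}

/-- **Scarf's lemma**. -/
theorem exists_dominant_surjOn (hs : IsSlack F s) (ht : t ∉ Set.range s)
    (hc : Function.LeftInverse c s) : ∃ S, Dominant F S ∧ Set.SurjOn c S Set.univ := by
  have := Fintype.ofFinite ι
  let rank (i : ι) (x : X) : α ×ₗ Fin (Nat.card X) := toLex (F i x, Finite.equivFin X x)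
  have hinj (i : ι) : Function.Injective (rank i) := fun x y h =>
    (Finite.equivFin X).injective (congrArg (fun p => (ofLex p).2) h)
  have hlt (i : ι) {x y : X} (h : F i x < F i y) : rank i x < rank i y :=
    Prod.Lex.toLex_lt_toLex.2 (Or.inl h)
  obtain ⟨S, hS, hsurj⟩ := exists_isRoom_surjOn hinj
    ⟨fun i x hx => hlt i (hs.1 i x hx), fun i j x hj hx => hlt i (hs.2 i j x hj hx)⟩ ht hc
  exact ⟨S, fun y => (hS.1 y).imp fun _ hi x hx => Prod.Lex.monotone_fst _ _ (hi x hx), hsurj⟩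

end TieBreak

/-! ### A covering theorem for the standard simplex -/

section Grid

theorem add_two_le_add_card_of_sum_lt {ι : Type*} [Fintype ι] {f g : ι → ℕ}
    (hfg : ∀ i, f i ≤ g i + 1) (hlt : ∑ i, g i < ∑ i, f i) (l : ι) :
    g l + 2 ≤ f l + Fintype.card ι := by
  classical
  have hl := mem_univ l
  have hrest : ∑ i ∈ univ.erase l, f i ≤ ∑ i ∈ univ.erase l, g i + #(univ.erase l) := by
    rw [card_eq_sum_ones, ← sum_add_distrib]
    exact sum_le_sum fun i _ => hfg i
  rw [← add_sum_erase _ f hl, ← add_sum_erase _ g hl] at hlt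
  have hcard := card_erase_add_one hl
  rw [card_univ] at hcard
  lia

variable {ι : Type*} [Fintype ι] [DecidableEq ι]

/-- The orders to which Scarf's lemma is applied. The grid points `v` of the simplex of size `k`
are ordered by each of their coordinates, which are shifted by one to make room for the slack
elements `Sum.inr j`. -/
def gridRank (k : ℕ) (l : ι) : (piAntidiag (univ : Finset ι) k) ⊕ ι → ℕ :=
  Sum.elim (fun v => v.1 l + 1) fun j => if j = l then 0 else k + 2

theorem sum_eq_of_mem_piAntidiag {k : ℕ} {v : ι → ℕ} (hv : v ∈ piAntidiag univ k) :
    ∑ i, v i = k :=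
  (mem_piAntidiag.1 hv).1

theorem isSlack_gridRank (k : ℕ) : IsSlack (gridRank (ι := ι) k) Sum.inr where
  lt_of_ne i x hx := by
    rcases x with v | j
    · simp [gridRank]
    · have hj : j ≠ i := fun h => hx (h ▸ rfl)
      simp [gridRank, hj]
  lt_of_notMem_range i j x hj hx := by
    rcases x with v | l
    · have hv : v.1 i ≤ k :=
        (single_le_sum_of_canonicallyOrdered (mem_univ i)).trans_eq (sum_eq_of_mem_piAntidiag v.2)
      simp only [gridRank, Sum.elim_inl, Sum.elim_inr, if_neg hj]
      lia
    · exact absurd (Set.mem_range_self l) hx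

theorem exists_mem_piAntidiag_ge [Nonempty ι] {k : ℕ} {m : ι → ℕ} (hm : ∑ i, m i ≤ k) :
    ∃ v ∈ piAntidiag univ k, m ≤ v := by
  obtain ⟨i⟩ := ‹Nonempty ι›
  refine ⟨m + Pi.single i (k - ∑ i, m i), ?_, le_self_add⟩
  simp [sum_add_distrib, hm]

theorem Dominant.lt_sum_gridRank [Nonempty ι] {k : ℕ} {m : ι → ℕ}
    {S : Finset ((piAntidiag (univ : Finset ι) k) ⊕ ι)} (hS : Dominant (gridRank k) S)
    (hm : ∀ l, ∃ x ∈ S, gridRank k l x ≤ m l) : k < ∑ l, m l := by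
  by_contra! hle
  obtain ⟨v, hv, hmv⟩ := exists_mem_piAntidiag_ge hle
  obtain ⟨l, hl⟩ := hS (Sum.inl ⟨v, hv⟩)
  obtain ⟨x, hx, hxm⟩ := hm l
  exact (Nat.lt_succ_of_le (hmv l)).not_ge ((hl x hx).trans hxm)

/-- The minima of a dominant set in the coordinate orders sum to more than `k`, so no coordinate of
one of its grid points exceeds the minimum in that order by as much as `card ι`. -/
theorem exists_mem_piAntidiag_near [Nonempty ι] (k : ℕ) (c : (ι → ℕ) → ι) :
    ∃ v ∈ piAntidiag univ k, ∀ i, v i ≤ Fintype.card ι ∨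
      ∃ w ∈ piAntidiag univ k, c w = i ∧
        ∀ l, v l ≤ w l + Fintype.card ι ∧ w l ≤ v l + Fintype.card ι := by
  obtain ⟨v₀, hv₀, -⟩ := exists_mem_piAntidiag_ge (m := (0 : ι → ℕ)) (k := k) (by simp)
  obtain ⟨S, hS, hsurj⟩ := exists_dominant_surjOn (isSlack_gridRank k)
    (t := Sum.inl ⟨v₀, hv₀⟩) (c := Sum.elim (fun v => c v.1) id) (by simp) fun _ => rfl
  have hne : S.Nonempty := by
    obtain ⟨x, hx, -⟩ := hsurj (Set.mem_univ (Classical.arbitrary ι))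
    exact ⟨x, hx⟩
  choose b hb using fun l => exists_isArgmin (f := gridRank k l) hne
  have hsum : k < ∑ l, gridRank k l (b l) := hS.lt_sum_gridRank fun l => ⟨b l, (hb l).1, le_rfl⟩
  have hlow : ∀ v, Sum.inl v ∈ S → ∀ l, v.1 l + 2 ≤ gridRank k l (b l) + Fintype.card ι :=
    fun v hv => add_two_le_add_card_of_sum_lt (fun l => (hb l).2 _ hv)
      (by rwa [sum_eq_of_mem_piAntidiag v.2])
  have hclose : ∀ v w, Sum.inl v ∈ S → Sum.inl w ∈ S → ∀ l, v.1 l ≤ w.1 l + Fintype.card ι :=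
    fun v w hv hw l => by
      have hvl := hlow v hv l
      have hwl : gridRank k l (b l) ≤ w.1 l + 1 := (hb l).2 _ hw
      lia
  have hslack : ∀ i, Sum.inr i ∈ S → gridRank k i (b i) = 0 := fun i hi =>
    Nat.le_zero.1 (((hb i).2 _ hi).trans_eq (by simp [gridRank]))
  obtain ⟨v, hv⟩ : ∃ v, Sum.inl v ∈ S := by
    obtain ⟨l, -, hl⟩ := exists_ne_zero_of_sum_ne_zero (Nat.ne_zero_of_lt hsum)
    obtain ⟨v | j, hx, hxl⟩ := hsurj (Set.mem_univ l)
    · exact ⟨v, hx⟩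
    · obtain rfl : j = l := hxl
      exact absurd (hslack j hx) hl
  refine ⟨v.1, v.2, fun i => ?_⟩
  obtain ⟨w | j, hx, hxi⟩ := hsurj (Set.mem_univ i)
  · exact Or.inr ⟨w.1, w.2, hxi, fun l => ⟨hclose v w hv hx l, hclose w v hx hv l⟩⟩
  · obtain rfl : j = i := hxi
    have hvj := hlow v hv j
    rw [hslack j hx] at hvj
    exact Or.inl (by lia)

end Grid

section Cover

variable {ι : Type*} [Fintype ι] {C : ι → Set (ι → ℝ)}

theorem div_mem_stdSimplex [DecidableEq ι] {k : ℕ} (hk : k ≠ 0) {v : ι → ℕ}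
    (hv : v ∈ piAntidiag univ k) : (fun i => (v i / k : ℝ)) ∈ stdSimplex ℝ ι := by
  refine ⟨fun i => by positivity, ?_⟩
  rw [← sum_div, ← Nat.cast_sum, sum_eq_of_mem_piAntidiag hv]
  exact div_self (Nat.cast_ne_zero.2 hk)

theorem exists_mem_stdSimplex_near [Nonempty ι] (hC : stdSimplex ℝ ι ⊆ ⋃ i, C i) {δ : ℝ}
    (hδ : 0 < δ) : ∃ x ∈ stdSimplex ℝ ι, ∀ i, x i ≤ δ ∨ ∃ y ∈ C i, dist x y ≤ δ := by
  classical
  obtain ⟨k, hk⟩ := exists_nat_gt (Fintype.card ι / δ)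
  have hk₀ : (0 : ℝ) < k := (by positivity : (0 : ℝ) ≤ Fintype.card ι / δ).trans_lt hk
  have hδk : Fintype.card ι / k ≤ δ := by
    rw [div_lt_iff₀ hδ] at hk
    rw [div_le_iff₀ hk₀]
    linarith
  let p (v : ι → ℕ) (i : ι) : ℝ := v i / k
  have hp : ∀ v ∈ piAntidiag univ k, p v ∈ stdSimplex ℝ ι := fun v hv =>
    div_mem_stdSimplex (by exact_mod_cast hk₀.ne') hv
  have hcol : ∀ v, ∃ i, v ∈ piAntidiag univ k → p v ∈ C i := fun v => by
    by_cases hv : v ∈ piAntidiag univ k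
    · exact (Set.mem_iUnion.1 (hC (hp v hv))).imp fun _ h _ => h
    · exact ⟨Classical.arbitrary ι, fun h => absurd h hv⟩
  choose c hc using hcol
  obtain ⟨v, hv, hnear⟩ := exists_mem_piAntidiag_near k c
  refine ⟨p v, hp v hv, fun i => (hnear i).imp (fun h => ?_) ?_⟩
  · exact (div_le_div_of_nonneg_right (by exact_mod_cast h) hk₀.le).trans hδk
  · rintro ⟨w, hw, rfl, hvw⟩
    refine ⟨p w, hc w hw, (dist_pi_le_iff hδ.le).2 fun l => le_trans ?_ hδk⟩
    have h₁ : (v l : ℝ) ≤ w l + Fintype.card ι := by exact_mod_cast (hvw l).1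
    have h₂ : (w l : ℝ) ≤ v l + Fintype.card ι := by exact_mod_cast (hvw l).2
    rw [Real.dist_eq, ← sub_div, abs_div, abs_of_pos hk₀]
    exact div_le_div_of_nonneg_right (abs_le.2 ⟨by linarith, by linarith⟩) hk₀.le

theorem exists_mem_stdSimplex_forall_mem [Nonempty ι] (hclosed : ∀ i, IsClosed (C i))
    (hC : stdSimplex ℝ ι ⊆ ⋃ i, C i) : ∃ x ∈ stdSimplex ℝ ι, ∀ i, x i ≠ 0 → x ∈ C i := by
  choose x hx hxC using fun m : ℕ =>
    exists_mem_stdSimplex_near hC (Nat.one_div_pos_of_nat (α := ℝ) (n := m))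
  obtain ⟨a, ha, φ, hφ, hlim⟩ := (isCompact_stdSimplex ℝ ι).tendsto_subseq hx
  refine ⟨a, ha, fun i hi => (hclosed i).closure_subset (Metric.mem_closure_iff.2 fun ε hε => ?_)⟩
  have hai : 0 < a i := (ha.1 i).lt_of_ne' hi
  have hη : 0 < min ε (a i) / 2 := half_pos (lt_min hε hai)
  have hδ := (tendsto_one_div_add_atTop_nhds_zero_nat (𝕜 := ℝ)).comp hφ.tendsto_atTop
  obtain ⟨m, hm, hm'⟩ :=
    ((hδ.eventually_lt_const hη).and (Metric.tendsto_nhds.1 hlim _ hη)).exists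
  simp only [Function.comp_apply] at hm hm'
  rcases hxC (φ m) i with hle | ⟨y, hy, hdist⟩
  · have h₁ := (abs_le.1 ((dist_le_pi_dist (x (φ m)) a i).trans hm'.le)).1
    linarith [min_le_right ε (a i)]
  · refine ⟨y, hy, (dist_triangle_left a y (x (φ m))).trans_lt ?_⟩
    linarith [min_le_left ε (a i)]

end Cover

/-! ### Ky Fan's inequality and concave games -/

section KyFan

theorem exists_mem_stdSimplex_forall_le {ι : Type*} [Fintype ι] [Nonempty ι]
    {g : (ι → ℝ) → ι → ℝ} (hg : ContinuousOn g (stdSimplex ℝ ι)) :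
    ∃ x ∈ stdSimplex ℝ ι, ∀ i, x i ≠ 0 → ∀ j, g x j ≤ g x i := by
  have hgi (i : ι) : ContinuousOn (fun x => g x i) (stdSimplex ℝ ι) :=
    (continuous_apply i).comp_continuousOn hg
  let C (i : ι) : Set (ι → ℝ) := ⋂ j, {x | x ∈ stdSimplex ℝ ι ∧ g x j ≤ g x i}
  have hclosed (i : ι) : IsClosed (C i) :=
    isClosed_iInter fun j => (isClosed_stdSimplex ℝ ι).isClosed_le (hgi j) (hgi i)
  obtain ⟨x, hx, hxC⟩ := exists_mem_stdSimplex_forall_mem hclosed fun x hx => by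
    obtain ⟨i, hi⟩ := Finite.exists_max (g x)
    exact Set.mem_iUnion.2 ⟨i, Set.mem_iInter.2 fun j => ⟨hx, hi j⟩⟩
  exact ⟨x, hx, fun i hi j => (Set.mem_iInter.1 (hxC i hi) j).2⟩

variable {E : Type*} [AddCommGroup E] [Module ℝ E] [TopologicalSpace E]
  [ContinuousAdd E] [ContinuousSMul ℝ E] {K : Set E} {φ : E → E → ℝ}

/-- At a convex combination `x` of the `y i` in which only maximisers of `φ x (y i)` carry weight,
quasiconcavity bounds this maximum by `φ x x`. -/
theorem exists_mem_forall_le_of_finite {κ : Type*} [Finite κ] [Nonempty κ] (hconv : Convex ℝ K)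
    (hcont : ∀ y ∈ K, ContinuousOn (fun x => φ x y) K)
    (hφ : ∀ x ∈ K, QuasiconcaveOn ℝ K (φ x)) {y : κ → E} (hy : ∀ i, y i ∈ K) :
    ∃ x ∈ K, ∀ i, φ x (y i) ≤ φ x x := by
  have := Fintype.ofFinite κ
  let p (w : κ → ℝ) : E := ∑ i, w i • y i
  have hp : Set.MapsTo p (stdSimplex ℝ κ) K := fun w hw =>
    hconv.sum_mem (fun i _ => hw.1 i) hw.2 fun i _ => hy i
  have hpc : Continuous p := by fun_prop
  obtain ⟨w, hw, hmax⟩ := exists_mem_stdSimplex_forall_le (g := fun w i => φ (p w) (y i))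
    (continuousOn_pi.2 fun i => (hcont _ (hy i)).comp hpc.continuousOn hp)
  refine ⟨p w, hp hw, fun j => ?_⟩
  have hsum : ∑ i with w i ≠ 0, w i = 1 := by rw [sum_filter_ne_zero, hw.2]
  have hpw : ∑ i with w i ≠ 0, w i • y i = p w :=
    sum_filter_of_ne fun i _ h => left_ne_zero_of_smul h
  have hmem := (hφ _ (hp hw) (φ (p w) (y j))).sum_mem (t := {i | w i ≠ 0}) (fun i _ => hw.1 i) hsum
    fun i hi => ⟨hy i, hmax i ((mem_filter_univ i).1 hi) j⟩
  rw [hpw] at hmem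
  exact hmem.2

/-- **Ky Fan's inequality**. -/
theorem exists_mem_forall_le_diag [T2Space E] (hK : IsCompact K) (hconv : Convex ℝ K)
    (hne : K.Nonempty) (hcont : ∀ y ∈ K, ContinuousOn (fun x => φ x y) K)
    (hdiag : ContinuousOn (fun x => φ x x) K) (hφ : ∀ x ∈ K, QuasiconcaveOn ℝ K (φ x)) :
    ∃ x ∈ K, ∀ y ∈ K, φ x y ≤ φ x x := by
  let A (y : K) : Set E := {x | x ∈ K ∧ φ x y ≤ φ x x}
  have hfin (T : Finset K) : (K ∩ ⋂ y ∈ T, A y).Nonempty := by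
    rcases T.eq_empty_or_nonempty with rfl | hT
    · simpa using hne
    have := hT.to_subtype
    obtain ⟨x, hx, hxT⟩ := exists_mem_forall_le_of_finite (y := fun z : T => (z.1 : E)) hconv hcont
      hφ fun z => z.1.2
    exact ⟨x, hx, Set.mem_iInter₂.2 fun y hy => ⟨hx, hxT ⟨y, hy⟩⟩⟩
  obtain ⟨x, hx, hxA⟩ := hK.inter_iInter_nonempty A
    (fun y => hK.isClosed.isClosed_le (hcont y y.2) hdiag) hfin
  exact ⟨x, hx, fun y hy => (Set.mem_iInter.1 hxA ⟨y, hy⟩).2⟩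

end KyFan

section DeviationPayoff

variable {ι : Type*} [Fintype ι] [DecidableEq ι] {E : ι → Type*} {f : ι → (∀ i, E i) → ℝ}
  {S : ∀ i, Set (E i)}

/-- The **Nikaido–Isoda function** of a game with payoffs `f`: the total payoff of the unilateral
deviations from the profile `x` to the components of `y`. -/
def deviationPayoff (f : ι → (∀ i, E i) → ℝ) (x y : ∀ i, E i) : ℝ :=
  ∑ i, f i (Function.update x i (y i))

theorem deviationPayoff_self (f : ι → (∀ i, E i) → ℝ) (x : ∀ i, E i) :
    deviationPayoff f x x = ∑ i, f i x := by
  simp only [deviationPayoff, Function.update_eq_self]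

theorem deviationPayoff_update_le_iff {x : ∀ i, E i} {i : ι} {y : E i} :
    deviationPayoff f x (Function.update x i y) ≤ deviationPayoff f x x ↔
      f i (Function.update x i y) ≤ f i x := by
  have hrest : ∑ j ∈ univ.erase i, f j (Function.update x j (Function.update x i y j)) =
      ∑ j ∈ univ.erase i, f j x := sum_congr rfl fun j hj => by
    rw [Function.update_of_ne (ne_of_mem_erase hj), Function.update_eq_self]
  rw [deviationPayoff_self, deviationPayoff, ← add_sum_erase _ _ (mem_univ i), hrest,
    ← add_sum_erase _ _ (mem_univ i), Function.update_self, add_le_add_iff_right]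

variable [∀ i, AddCommMonoid (E i)] [∀ i, SMul ℝ (E i)]

theorem concaveOn_deviationPayoff {x : ∀ i, E i} (hconv : ∀ i, Convex ℝ (S i))
    (hconc : ∀ i, ConcaveOn ℝ (S i) fun y => f i (Function.update x i y)) :
    ConcaveOn ℝ (Set.univ.pi S) (deviationPayoff f x) := by
  refine ⟨convex_pi fun i _ => hconv i, fun y hy z hz a b ha hb hab => ?_⟩
  simp only [deviationPayoff, smul_sum, ← sum_add_distrib]
  exact sum_le_sum fun i _ => (hconc i).2 (hy i trivial) (hz i trivial) ha hb hab

end DeviationPayoff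

section Nash

variable {ι : Type*} [Finite ι] [DecidableEq ι] {E : ι → Type*} [∀ i, AddCommGroup (E i)]
  [∀ i, Module ℝ (E i)] [∀ i, TopologicalSpace (E i)] [∀ i, ContinuousAdd (E i)]
  [∀ i, ContinuousSMul ℝ (E i)] [∀ i, T2Space (E i)] {f : ι → (∀ i, E i) → ℝ}
  {S : ∀ i, Set (E i)}

/-- **Nash's theorem** for concave games. -/
theorem exists_forall_update_le (hS : ∀ i, IsCompact (S i)) (hconv : ∀ i, Convex ℝ (S i))
    (hne : ∀ i, (S i).Nonempty) (hf : ∀ i, ContinuousOn (f i) (Set.univ.pi S))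
    (hconc : ∀ i, ∀ x ∈ Set.univ.pi S,
      ConcaveOn ℝ (S i) fun y => f i (Function.update x i y)) :
    ∃ x ∈ Set.univ.pi S, ∀ i, ∀ y ∈ S i, f i (Function.update x i y) ≤ f i x := by
  have := Fintype.ofFinite ι
  have hupd {x : ∀ i, E i} (hx : x ∈ Set.univ.pi S) {i : ι} {y : E i} (hy : y ∈ S i) :
      Function.update x i y ∈ Set.univ.pi S :=
    (Set.update_mem_pi_iff_of_mem hx).2 fun _ => hy
  obtain ⟨x, hx, hmax⟩ := exists_mem_forall_le_diag (φ := deviationPayoff f) (isCompact_univ_pi hS)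
    (convex_pi fun i _ => hconv i) (Set.univ_pi_nonempty_iff.2 hne)
    (fun y hy => continuousOn_finsetSum _ fun i _ => (hf i).comp (by fun_prop)
      fun x hx => hupd hx (hy i trivial))
    (by simpa only [deviationPayoff_self] using continuousOn_finsetSum _ fun i _ => hf i)
    fun x hx => (concaveOn_deviationPayoff hconv fun i => hconc i x hx).quasiconcaveOn
  exact ⟨x, hx, fun i y hy => deviationPayoff_update_le_iff.1 (hmax _ (hupd hx hy))⟩

end Nash

/-! ### Expected utility and best responses -/

section Game

variable {n : ℕ}

theorem prob_update (x : Fin n → Fin n → ℝ) (i : Fin n) (y : Fin n → ℝ)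
    (s : Fin n → Option (Fin n)) :
    prob (Function.update x i y) s = (s i).elim (1 - ∑ j, y j) y *
      ∏ k ∈ univ.erase i, (s k).elim (1 - ∑ j, x k j) (x k) := by
  rw [prob, ← mul_prod_erase univ _ (mem_univ i), Function.update_self]
  congr 1
  exact prod_congr rfl fun k hk => by rw [Function.update_of_ne (ne_of_mem_erase hk)]

theorem util_update_smul_add_smul (u x : Fin n → Fin n → ℝ) (i : Fin n) (y z : Fin n → ℝ)
    {a b : ℝ} (hab : a + b = 1) :
    util u (Function.update x i (a • y + b • z)) i =
      a * util u (Function.update x i y) i + b * util u (Function.update x i z) i := by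
  simp only [util, mul_sum, ← sum_add_distrib]
  refine sum_congr rfl fun s _ => ?_
  have helim : (s i).elim (1 - ∑ j, (a • y + b • z) j) (a • y + b • z) =
      a * (s i).elim (1 - ∑ j, y j) y + b * (s i).elim (1 - ∑ j, z j) z := by
    rcases s i with _ | k
    · simp only [Option.elim_none, Pi.add_apply, Pi.smul_apply, smul_eq_mul, sum_add_distrib,
        ← mul_sum]
      linear_combination -hab
    · simp
  rw [prob_update, prob_update, prob_update, helim]
  ring

theorem concaveOn_util_update (u x : Fin n → Fin n → ℝ) (i : Fin n) {S : Set (Fin n → ℝ)}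
    (hS : Convex ℝ S) : ConcaveOn ℝ S fun y => util u (Function.update x i y) i :=
  ⟨hS, fun y _ z _ _ _ _ _ hab => (util_update_smul_add_smul u x i y z hab).ge⟩

theorem continuous_util (u : Fin n → Fin n → ℝ) (i : Fin n) :
    Continuous fun x => util u x i := by
  unfold util prob
  refine continuous_finsetSum _ fun s _ => Continuous.mul ?_ continuous_const
  refine continuous_finsetProd _ fun k _ => ?_
  rcases s k with _ | j
  · simp only [Option.elim_none]
    fun_prop
  · simp only [Option.elim_some]
    fun_prop

theorem IsStrat.mem_Icc {y : Fin n → ℝ} (hy : IsStrat y) : y ∈ Set.Icc 0 1 :=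
  ⟨hy.1, fun j => (single_le_sum (fun k _ => hy.1 k) (mem_univ j)).trans hy.2⟩

/-- The strategies available to agent `i`: she does not abstain, and if she belongs to `D` then she
votes with probability at least `ε`. -/
def feasible (ε : ℝ) (D : Set (Fin n)) (i : Fin n) : Set (Fin n → ℝ) :=
  stdSimplex ℝ (Fin n) ∩ {y | i ∈ D → ε ≤ y i}

variable {ε : ℝ} {D : Set (Fin n)} {i : Fin n}

theorem isStrat_of_mem_feasible {y : Fin n → ℝ} (hy : y ∈ feasible ε D i) : IsStrat y :=
  ⟨hy.1.1, hy.1.2.le⟩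

theorem isClosed_feasible : IsClosed (feasible ε D i) := by
  refine (isClosed_stdSimplex ℝ (Fin n)).inter ?_
  rw [Set.ofPred_forall]
  exact isClosed_iInter fun _ => isClosed_le continuous_const (continuous_apply i)

theorem convex_feasible : Convex ℝ (feasible ε D i) := by
  refine (convex_stdSimplex ℝ (Fin n)).inter fun y hy z hz a b ha hb hab hi => ?_
  exact convex_Ici ε (hy hi) (hz hi) ha hb hab

theorem nonempty_feasible (hε : ε ≤ 1) : (feasible ε D i).Nonempty :=
  ⟨Pi.single i 1, single_mem_stdSimplex ℝ i, fun _ => by simpa using hε⟩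

end Game

theorem stmt6_general {n : ℕ} (u : Fin n → Fin n → ℝ) {S : Fin n → Set (Fin n → ℝ)}
    (hS : ∀ i, ∀ y ∈ S i, IsStrat y) (hclosed : ∀ i, IsClosed (S i))
    (hconv : ∀ i, Convex ℝ (S i)) (hne : ∀ i, (S i).Nonempty) :
    ∃ x, IsMixed x ∧ (∀ i, x i ∈ S i) ∧
      ∀ i, ∀ y ∈ S i, util u x i ≥ util u (Function.update x i y) i := by
  have hcompact (i : Fin n) : IsCompact (S i) :=
    isCompact_Icc.of_isClosed_subset (hclosed i) fun y hy => (hS i y hy).mem_Icc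
  obtain ⟨x, hx, hbr⟩ := exists_forall_update_le hcompact hconv hne
    (f := fun i x => util u x i) (fun i => (continuous_util u i).continuousOn)
    fun i x _ => concaveOn_util_update u x i (hconv i)
  exact ⟨x, fun i => hS i _ (hx i trivial), fun i => hx i trivial, hbr⟩

/-- Fixed point existence: for every ε ∈ [0,1] and every subset D* of agents there
is a mixed profile x such that each i ∈ D* plays a best response among the
restricted strategies (unit total probability, self-vote probability at least ε),
and each j ∉ D* plays a best response among all non-abstaining mixed strategies. -/
theorem stmt6 {n : ℕ} (ε : ℝ) (hε : ε ∈ Set.Icc (0:ℝ) 1)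
    (u : Fin n → Fin n → ℝ) (hu : ∀ i j, 0 ≤ u i j ∧ u i j ≤ 1)
    (D : Set (Fin n)) :
    ∃ x : Fin n → Fin n → ℝ,
      (∀ i j, 0 ≤ x i j) ∧
      (∀ i ∈ D, (∑ j, x i j) = 1 ∧ ε ≤ x i i ∧
        ∀ y : Fin n → ℝ, (∀ j, 0 ≤ y j) → (∑ j, y j) = 1 → ε ≤ y i →
          util u x i ≥ util u (Function.update x i y) i) ∧
      (∀ i ∉ D, (∑ j, x i j) = 1 ∧
        ∀ y : Fin n → ℝ, (∀ j, 0 ≤ y j) → (∑ j, y j) = 1 →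
          util u x i ≥ util u (Function.update x i y) i) := by
  obtain ⟨x, hx, hxS, hbr⟩ := stmt6_general u (S := feasible ε D)
    (fun _ _ => isStrat_of_mem_feasible) (fun _ => isClosed_feasible) (fun _ => convex_feasible)
    fun _ => nonempty_feasible hε.2
  exact ⟨x, fun i => (hx i).1,
    fun i hi => ⟨(hxS i).1.2, (hxS i).2 hi, fun y h₀ h₁ hy => hbr i y ⟨⟨h₀, h₁⟩, fun _ => hy⟩⟩,
    fun i hi => ⟨(hxS i).1.2, fun y h₀ h₁ => hbr i y ⟨⟨h₀, h₁⟩, fun h => absurd h hi⟩⟩⟩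
end
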